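/- arXiv:1907.07432 — 7 statements merged into one kernel-verified Lean document; each statement's English description precedes it below -/
import Mathlib

section
/- Let p, q ∈ [0,1]. For every 4×4 complex matrix ρ, the quantum-switch output S(ρ) = Σ_{i,j∈{1,2}} W_{ij} (ρ ⊗ |+⟩⟨+|) W_{ij}† satisfies S(ρ) = [ (1−p)(1−q)·ρ + (1−p)q·(I₂⊗Z) ρ (I₂⊗Z)† + p(1−q)·(I₂⊗X) ρ (I₂⊗X)† ] ⊗ |+⟩⟨+| + pq·(I₂⊗(X·Z)) ρ (I₂⊗(X·Z))† ⊗ |−⟩⟨−|. -/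
open Matrix Kronecker Complex

noncomputable section

/-- Pauli X gate. -/
def PX : Matrix (Fin 2) (Fin 2) ℂ := !![0, 1; 1, 0]

/-- Pauli Z gate. -/
def PZ : Matrix (Fin 2) (Fin 2) ℂ := !![1, 0; 0, -1]

/-- 2×2 identity. -/
def I2 : Matrix (Fin 2) (Fin 2) ℂ := 1

def ket0 : Fin 2 → ℂ := ![1, 0]
def ket1 : Fin 2 → ℂ := ![0, 1]
def ketPlus : Fin 2 → ℂ := ((Real.sqrt 2 : ℂ))⁻¹ • (ket0 + ket1)
def ketMinus : Fin 2 → ℂ := ((Real.sqrt 2 : ℂ))⁻¹ • (ket0 - ket1)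

/-- Projector |v⟩⟨v|. -/
def proj (v : Fin 2 → ℂ) : Matrix (Fin 2) (Fin 2) ℂ := vecMulVec v (star v)

/-- Kronecker product, flattened to `Fin (m*n)` indices (row-major). -/
def kron {m n : ℕ} (A : Matrix (Fin m) (Fin m) ℂ) (B : Matrix (Fin n) (Fin n) ℂ) :
    Matrix (Fin (m * n)) (Fin (m * n)) ℂ :=
  Matrix.reindex finProdFinEquiv finProdFinEquiv (A ⊗ₖ B)

/-- Bit-flip channel Kraus operators: D₁ = √(1-p)·I₂, D₂ = √p·X. -/
def Dk (p : ℝ) : Fin 2 → Matrix (Fin 2) (Fin 2) ℂ :=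
  ![(Real.sqrt (1 - p) : ℂ) • I2, (Real.sqrt p : ℂ) • PX]

/-- Phase-flip channel Kraus operators: E₁ = √(1-q)·I₂, E₂ = √q·Z. -/
def Ek (q : ℝ) : Fin 2 → Matrix (Fin 2) (Fin 2) ℂ :=
  ![(Real.sqrt (1 - q) : ℂ) • I2, (Real.sqrt q : ℂ) • PZ]

/-- Quantum-switch Kraus operators W_{ij} = I₂ ⊗ (DᵢEⱼ ⊗ |0⟩⟨0| + EⱼDᵢ ⊗ |1⟩⟨1|),
with tensor ordering Alice ⊗ Bob ⊗ control (flattened row-major). -/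
def W (p q : ℝ) (i j : Fin 2) : Matrix (Fin 8) (Fin 8) ℂ :=
  kron I2 (kron (Dk p i * Ek q j) (proj ket0) + kron (Ek q j * Dk p i) (proj ket1))

/-- Quantum-switch output S(ρ) = Σᵢⱼ W_{ij} (ρ ⊗ |+⟩⟨+|) W_{ij}†. -/
def Sout (p q : ℝ) (ρ : Matrix (Fin 4) (Fin 4) ℂ) : Matrix (Fin 8) (Fin 8) ℂ :=
  ∑ i : Fin 2, ∑ j : Fin 2, W p q i j * kron ρ (proj ketPlus) * (W p q i j)ᴴ

theorem kron_mul_aux {m n : ℕ} (A C : Matrix (Fin m) (Fin m) ℂ) (B D : Matrix (Fin n) (Fin n) ℂ) :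
    kron A B * kron C D = kron (A * C) (B * D) := by
  simp only [kron, Matrix.reindex_apply, Matrix.submatrix_mul_equiv, Matrix.mul_kronecker_mul]

theorem kron_conj_aux {m n : ℕ} (A : Matrix (Fin m) (Fin m) ℂ) (B : Matrix (Fin n) (Fin n) ℂ) :
    (kron A B)ᴴ = kron Aᴴ Bᴴ := by
  simp only [kron, Matrix.reindex_apply, Matrix.conjTranspose_submatrix,
    Matrix.conjTranspose_kronecker]

theorem kron_add_left_aux {m n : ℕ} (A C : Matrix (Fin m) (Fin m) ℂ)
    (B : Matrix (Fin n) (Fin n) ℂ) : kron (A + C) B = kron A B + kron C B := by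
  ext i j; simp [kron, add_mul]

theorem kron_add_right_aux {m n : ℕ} (A : Matrix (Fin m) (Fin m) ℂ)
    (B D : Matrix (Fin n) (Fin n) ℂ) : kron A (B + D) = kron A B + kron A D := by
  ext i j; simp [kron, mul_add]

theorem kron_smul_left_aux {m n : ℕ} (c : ℂ) (A : Matrix (Fin m) (Fin m) ℂ)
    (B : Matrix (Fin n) (Fin n) ℂ) : kron (c • A) B = c • kron A B := by
  ext i j; simp [kron, mul_assoc]

theorem kron_smul_right_aux {m n : ℕ} (c : ℂ) (A : Matrix (Fin m) (Fin m) ℂ)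
    (B : Matrix (Fin n) (Fin n) ℂ) : kron A (c • B) = c • kron A B := by
  ext i j; simp [kron, mul_left_comm]

theorem kron_assoc_aux (A B C : Matrix (Fin 2) (Fin 2) ℂ) :
    (kron A (kron B C) : Matrix (Fin 8) (Fin 8) ℂ) = kron (kron A B) C := by
  ext i j
  have key : ∀ i : Fin 8,
      (finProdFinEquiv (m := 2) (n := 2 * 2)).symm i =
        (((finProdFinEquiv (m := 2) (n := 2)).symm
            ((finProdFinEquiv (m := 2 * 2) (n := 2)).symm i).1).1,
         finProdFinEquiv (((finProdFinEquiv (m := 2) (n := 2)).symm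
            ((finProdFinEquiv (m := 2 * 2) (n := 2)).symm i).1).2,
            ((finProdFinEquiv (m := 2 * 2) (n := 2)).symm i).2)) := by decide
  change A ((finProdFinEquiv (m := 2) (n := 2 * 2)).symm i).1
      ((finProdFinEquiv (m := 2) (n := 2 * 2)).symm j).1 *
      kron B C ((finProdFinEquiv (m := 2) (n := 2 * 2)).symm i).2
      ((finProdFinEquiv (m := 2) (n := 2 * 2)).symm j).2 = _
  rw [key i, key j]
  simp only [kron, Matrix.reindex_apply, Matrix.submatrix_apply, Equiv.symm_apply_apply,
    Matrix.kroneckerMap_apply, mul_assoc]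

/-- A switch Kraus operator whose two orderings agree up to a sign `s`. -/
theorem W_aux (M : Matrix (Fin 2) (Fin 2) ℂ) (a s : ℂ) :
    (kron I2 (kron (a • M) (proj ket0) + kron ((a * s) • M) (proj ket1)) :
      Matrix (Fin 8) (Fin 8) ℂ) =
      a • (kron (kron I2 M) (proj ket0 + s • proj ket1) : Matrix (Fin 8) (Fin 8) ℂ) := by
  have h := kron_assoc_aux I2 M (proj ket0 + s • proj ket1)
  rw [← h, kron_add_right_aux (A := M), kron_smul_right_aux, kron_smul_left_aux,
    kron_smul_left_aux, mul_smul, ← smul_add]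
  exact kron_smul_right_aux _ _ _

theorem term_aux (M : Matrix (Fin 2) (Fin 2) ℂ) (a : ℝ) (P : Matrix (Fin 2) (Fin 2) ℂ)
    (ρ : Matrix (Fin 4) (Fin 4) ℂ) (Q : Matrix (Fin 2) (Fin 2) ℂ) :
    ((a : ℂ) • (kron (kron I2 M) P : Matrix (Fin 8) (Fin 8) ℂ)) * (kron ρ Q) *
      ((a : ℂ) • (kron (kron I2 M) P : Matrix (Fin 8) (Fin 8) ℂ))ᴴ =
      ((a * a : ℝ) : ℂ) • (kron (kron I2 M * ρ * (kron I2 M)ᴴ) (P * Q * Pᴴ) :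
        Matrix (Fin 8) (Fin 8) ℂ) := by
  have h : (kron (kron I2 M) P : Matrix (Fin 8) (Fin 8) ℂ) * (kron ρ Q) *
      (kron (kron I2 M) P : Matrix (Fin 8) (Fin 8) ℂ)ᴴ =
      kron (kron I2 M * ρ * (kron I2 M)ᴴ) (P * Q * Pᴴ) := by
    have h1 := kron_mul_aux (kron I2 M) ρ P Q
    have h2 := kron_conj_aux (kron I2 M) P
    have h3 := kron_mul_aux (kron I2 M * ρ) (kron I2 M)ᴴ (P * Q) Pᴴ
    exact (congrArg₂ (· * ·) h1 h2).trans h3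
  rw [Matrix.conjTranspose_smul, Matrix.smul_mul, Matrix.smul_mul, Matrix.mul_smul, smul_smul, h]
  simp

theorem W_term_aux (p q : ℝ) (i j : Fin 2) (M : Matrix (Fin 2) (Fin 2) ℂ) (a : ℝ) (s : ℂ)
    (h1 : Dk p i * Ek q j = (a : ℂ) • M) (h2 : Ek q j * Dk p i = ((a : ℂ) * s) • M)
    (ρ : Matrix (Fin 4) (Fin 4) ℂ) :
    W p q i j * kron ρ (proj ketPlus) * (W p q i j)ᴴ =
      ((a * a : ℝ) : ℂ) • (kron (kron I2 M * ρ * (kron I2 M)ᴴ)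
        ((proj ket0 + s • proj ket1) * proj ketPlus * (proj ket0 + s • proj ket1)ᴴ) :
        Matrix (Fin 8) (Fin 8) ℂ) := by
  have hW : W p q i j = (a : ℂ) •
      (kron (kron I2 M) (proj ket0 + s • proj ket1) : Matrix (Fin 8) (Fin 8) ℂ) := by
    rw [← W_aux, ← h1, ← h2]; rfl
  rw [hW]
  exact term_aux M a _ ρ _

theorem proj_apply_aux (v : Fin 2 → ℂ) (i j : Fin 2) : proj v i j = v i * star (v j) := rfl

theorem ctrl_plus_aux : (proj ket0 + (1 : ℂ) • proj ket1) * proj ketPlus *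
    (proj ket0 + (1 : ℂ) • proj ket1)ᴴ = proj ketPlus := by
  have h : proj ket0 + (1 : ℂ) • proj ket1 = 1 := by
    ext i j; fin_cases i <;> fin_cases j <;> simp [proj_apply_aux, ket0, ket1]
  rw [h]; simp

theorem ctrl_minus_aux : (proj ket0 + (-1 : ℂ) • proj ket1) * proj ketPlus *
    (proj ket0 + (-1 : ℂ) • proj ket1)ᴴ = proj ketMinus := by
  have h : proj ket0 + (-1 : ℂ) • proj ket1 = PZ := by
    ext i j; fin_cases i <;> fin_cases j <;> simp [proj_apply_aux, ket0, ket1, PZ]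
  rw [h]
  ext i j; fin_cases i <;> fin_cases j <;>
    simp [proj_apply_aux, ket0, ket1, PZ, ketPlus, ketMinus, Matrix.mul_apply, Fin.sum_univ_two,
      Matrix.vecMul, dotProduct]

theorem kron_I2_aux : (kron I2 I2 : Matrix (Fin 4) (Fin 4) ℂ) = 1 := by
  simp [kron, I2]

theorem quantum_switch_output (p q : ℝ) (hp : p ∈ Set.Icc (0 : ℝ) 1)
    (hq : q ∈ Set.Icc (0 : ℝ) 1) (ρ : Matrix (Fin 4) (Fin 4) ℂ) :
    Sout p q ρ =
      kron (((1 - p) * (1 - q) : ℝ) • ρ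
          + ((1 - p) * q : ℝ) • (kron I2 PZ * ρ * (kron I2 PZ)ᴴ)
          + (p * (1 - q) : ℝ) • (kron I2 PX * ρ * (kron I2 PX)ᴴ)) (proj ketPlus)
      + (p * q : ℝ) • kron (kron I2 (PX * PZ) * ρ * (kron I2 (PX * PZ))ᴴ) (proj ketMinus) := by
  obtain ⟨hp0, hp1⟩ := hp
  obtain ⟨hq0, hq1⟩ := hq
  have e1 : √(1 - p) * √(1 - p) = 1 - p := Real.mul_self_sqrt (by linarith)
  have e2 : √p * √p = p := Real.mul_self_sqrt hp0
  have e3 : √(1 - q) * √(1 - q) = 1 - q := Real.mul_self_sqrt (by linarith)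
  have e4 : √q * √q = q := Real.mul_self_sqrt hq0
  have t00 := W_term_aux p q 0 0 I2 (√(1 - p) * √(1 - q)) 1
    (by simp [-Complex.coe_smul, Dk, Ek, I2, smul_smul, mul_comm]) (by simp [-Complex.coe_smul, Dk, Ek, I2, smul_smul, mul_comm]) ρ
  have t01 := W_term_aux p q 0 1 PZ (√(1 - p) * √q) 1
    (by simp [-Complex.coe_smul, Dk, Ek, I2, smul_smul, mul_comm]) (by simp [-Complex.coe_smul, Dk, Ek, I2, smul_smul, mul_comm]) ρ
  have t10 := W_term_aux p q 1 0 PX (√p * √(1 - q)) 1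
    (by simp [-Complex.coe_smul, Dk, Ek, I2, smul_smul, mul_comm]) (by simp [-Complex.coe_smul, Dk, Ek, I2, smul_smul, mul_comm]) ρ
  have hXZ : PZ * PX = -(PX * PZ) := by
    ext i j; fin_cases i <;> fin_cases j <;> simp [PX, PZ]
  have t11 := W_term_aux p q 1 1 (PX * PZ) (√p * √q) (-1)
    (by simp [-Complex.coe_smul, Dk, Ek, smul_smul, mul_comm]) (by simp [-Complex.coe_smul, Dk, Ek, smul_smul, mul_comm, hXZ]) ρ
  rw [ctrl_plus_aux] at t00 t01 t10
  rw [ctrl_minus_aux] at t11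
  rw [mul_mul_mul_comm] at t00 t01 t10 t11
  rw [e1, e3] at t00
  rw [e1, e4] at t01
  rw [e2, e3] at t10
  rw [e2, e4] at t11
  have hI : kron I2 I2 * ρ * (kron I2 I2)ᴴ = ρ := by
    have h := kron_I2_aux
    have h' : (1 : Matrix (Fin 4) (Fin 4) ℂ) * ρ * (1 : Matrix (Fin 4) (Fin 4) ℂ)ᴴ = ρ := by simp
    rw [← h] at h'
    exact h'
  rw [hI] at t00
  simp only [Sout, Fin.sum_univ_two]
  rw [t00, t01, t10, t11]
  have k : ∀ A B C : Matrix (Fin 4) (Fin 4) ℂ, ∀ a b c : ℝ,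
      (kron (a • A + b • B + c • C) (proj ketPlus) : Matrix (Fin 8) (Fin 8) ℂ) =
      (a : ℂ) • kron A (proj ketPlus) + (b : ℂ) • kron B (proj ketPlus)
        + (c : ℂ) • kron C (proj ketPlus) := by
    intro A B C a b c
    rw [← kron_smul_left_aux, ← kron_smul_left_aux, ← kron_smul_left_aux,
      ← kron_add_left_aux, ← kron_add_left_aux]
    rfl
  have k' := k ρ (kron I2 PZ * ρ * (kron I2 PZ)ᴴ) (kron I2 PX * ρ * (kron I2 PX)ᴴ)
    ((1 - p) * (1 - q)) ((1 - p) * q) (p * (1 - q))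
  refine Eq.trans ?_ (congrArg₂ (· + ·) k'.symm rfl)
  simp only [add_assoc]
  rfl

end
end

section
/- Let p, q ∈ [0,1] and let ρ be any 4×4 complex matrix. Conditioning the quantum-switch output on the control-qubit outcome |−⟩ gives (I₄ ⊗ ⟨−|) · S(ρ) · (I₄ ⊗ |−⟩) = pq · (I₂⊗(X·Z)) ρ (I₂⊗(X·Z))†, where S(ρ) = Σ_{i,j∈{1,2}} W_{ij} (ρ ⊗ |+⟩⟨+|) W_{ij}†; moreover the corrective unitary operation recovers ρ exactly: (I₂⊗(X·Z))† [ (I₂⊗(X·Z)) ρ (I₂⊗(X·Z))† ] (I₂⊗(X·Z)) = ρ. Hence, with heralding probability pq, the entanglement distribution via quantum switch is noiseless. -/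
open Matrix Kronecker Complex

noncomputable section

/-- Contraction of the control-qubit factor of an 8×8 matrix with a vector v:
(I₄ ⊗ ⟨v|) M (I₄ ⊗ |v⟩). -/
def contractCtrl (M : Matrix (Fin 8) (Fin 8) ℂ) (v : Fin 2 → ℂ) :
    Matrix (Fin 4) (Fin 4) ℂ :=
  Matrix.of fun a b => ∑ i : Fin 2, ∑ j : Fin 2,
    star (v i) * M (finProdFinEquiv (a, i)) (finProdFinEquiv (b, j)) * v j

/-- `I₂ ⊗ A` as a 4×4 matrix. -/
def auxG (A : Matrix (Fin 2) (Fin 2) ℂ) : Matrix (Fin 4) (Fin 4) ℂ := kron I2 A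

/-- The controlled operator `I₂ ⊗ (A ⊗ |0⟩⟨0| + B ⊗ |1⟩⟨1|)`. -/
def auxV (A B : Matrix (Fin 2) (Fin 2) ℂ) : Matrix (Fin 8) (Fin 8) ℂ :=
  kron I2 (kron A (proj ket0) + kron B (proj ket1))

/-- The initial state `ρ ⊗ |+⟩⟨+|`. -/
def auxR (ρ : Matrix (Fin 4) (Fin 4) ℂ) : Matrix (Fin 8) (Fin 8) ℂ := kron ρ (proj ketPlus)

/-- The index pairing. -/
def auxI (a : Fin 4) (i : Fin 2) : Fin 8 := finProdFinEquiv (a, i)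

/-- Auxiliary: entries of a controlled operator. -/
theorem aux_entry (A B : Matrix (Fin 2) (Fin 2) ℂ) (a c : Fin 4) (i k : Fin 2) :
    auxV A B (auxI a i) (auxI c k) =
    if i = k then (if i = 0 then auxG A a c else auxG B a c) else 0 := by
  have key : ∀ (a c : Fin 4) (i k : Fin 2), auxV A B (auxI a i) (auxI c k) =
      I2 (Fin.divNat (m := 2) (n := 2) a) (Fin.divNat (m := 2) (n := 2) c) *
      (A (Fin.modNat (m := 2) (n := 2) a) (Fin.modNat (m := 2) (n := 2) c) * proj ket0 i k +
       B (Fin.modNat (m := 2) (n := 2) a) (Fin.modNat (m := 2) (n := 2) c) * proj ket1 i k) := by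
    intro a c i k
    fin_cases a <;> fin_cases i <;> fin_cases c <;> fin_cases k <;> rfl
  have kg : ∀ (A : Matrix (Fin 2) (Fin 2) ℂ), auxG A a c =
      I2 (Fin.divNat (m := 2) (n := 2) a) (Fin.divNat (m := 2) (n := 2) c) *
      A (Fin.modNat (m := 2) (n := 2) a) (Fin.modNat (m := 2) (n := 2) c) := fun _ => rfl
  rw [key, kg, kg]
  fin_cases i <;> fin_cases k <;> simp [proj, ket0, ket1, vecMulVec_apply]

theorem aux_half : ((Real.sqrt 2 : ℂ))⁻¹ * ((Real.sqrt 2 : ℂ))⁻¹ = 1 / 2 := by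
  rw [← mul_inv, ← Complex.ofReal_mul, Real.mul_self_sqrt (by norm_num)]
  norm_num

theorem aux_plus (ρ : Matrix (Fin 4) (Fin 4) ℂ) (a c : Fin 4) (i k : Fin 2) :
    auxR ρ (auxI a i) (auxI c k) = ρ a c * (1 / 2) := by
  have h : proj ketPlus i k = 1 / 2 := by
    rw [← aux_half]
    fin_cases i <;> fin_cases k <;> simp [proj, ketPlus, ket0, ket1, vecMulVec_apply]
  rw [← h]
  unfold auxR kron auxI
  rw [Matrix.reindex_apply]
  erw [Matrix.submatrix_apply, Equiv.symm_apply_apply,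
    Equiv.symm_apply_apply]
  rfl

theorem aux_sum (f : Fin 8 → ℂ) :
    ∑ x, f x = ∑ a : Fin 4, ∑ i : Fin 2, f (auxI a i) := by
  rw [← Fintype.sum_prod_type' (fun (a : Fin 4) (i : Fin 2) => f (auxI a i))]
  exact (Equiv.sum_comp (finProdFinEquiv : Fin 4 × Fin 2 ≃ Fin (4 * 2)) f).symm

/-- The contracted branch is given by a single Kraus operator, half the commutator. -/
theorem aux_branch (A B : Matrix (Fin 2) (Fin 2) ℂ) (ρ : Matrix (Fin 4) (Fin 4) ℂ) :
    contractCtrl (auxV A B * auxR ρ * (auxV A B)ᴴ) ketMinus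
    = (1 / 4 : ℂ) • ((auxG A - auxG B) * ρ * (auxG A - auxG B)ᴴ) := by
  ext a b
  have h2 := aux_half
  have e : ∀ i j : Fin 2, (auxV A B * auxR ρ * (auxV A B)ᴴ) (auxI a i) (auxI b j) =
      (1 / 2) * ((if i = 0 then auxG A else auxG B) * ρ *
        (if j = 0 then auxG A else auxG B)ᴴ) a b := by
    intro i j
    simp only [Matrix.mul_apply, aux_sum, aux_entry, aux_plus, Matrix.conjTranspose_apply]
    fin_cases i <;> fin_cases j <;>
      simp [Finset.mul_sum, Finset.sum_mul] <;>
      refine Finset.sum_congr rfl fun x _ => Finset.sum_congr rfl fun y _ => ?_ <;> ring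
  have e' : contractCtrl (auxV A B * auxR ρ * (auxV A B)ᴴ) ketMinus a b =
      ∑ i : Fin 2, ∑ j : Fin 2, star (ketMinus i) *
        (auxV A B * auxR ρ * (auxV A B)ᴴ) (auxI a i) (auxI b j) * ketMinus j := rfl
  rw [e']
  simp only [e, Fin.sum_univ_two]
  simp only [Matrix.conjTranspose_sub, Matrix.sub_mul, Matrix.mul_sub, Matrix.smul_apply,
    Matrix.sub_apply, smul_eq_mul]
  have m0 : ketMinus 0 = ((Real.sqrt 2 : ℂ))⁻¹ := by simp [ketMinus, ket0, ket1]
  have m1 : ketMinus 1 = -((Real.sqrt 2 : ℂ))⁻¹ := by simp [ketMinus, ket0, ket1]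
  have s : star ((Real.sqrt 2 : ℂ))⁻¹ = ((Real.sqrt 2 : ℂ))⁻¹ := by simp
  rw [m0, m1, star_neg, s]
  simp only [if_true, one_ne_zero, if_false]
  generalize ((Real.sqrt 2 : ℂ))⁻¹ = r at h2
  linear_combination (1 / 2 : ℂ) * ((auxG A * ρ * (auxG A)ᴴ) a b
    - (auxG A * ρ * (auxG B)ᴴ) a b
    - (auxG B * ρ * (auxG A)ᴴ) a b
    + (auxG B * ρ * (auxG B)ᴴ) a b) * h2

theorem aux_contract_add (M N : Matrix (Fin 8) (Fin 8) ℂ) (v : Fin 2 → ℂ) :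
    contractCtrl (M + N) v = contractCtrl M v + contractCtrl N v := by
  ext a b
  have e : ∀ K : Matrix (Fin 8) (Fin 8) ℂ, contractCtrl K v a b =
      ∑ i : Fin 2, ∑ j : Fin 2, star (v i) * K (auxI a i) (auxI b j) * v j := fun _ => rfl
  rw [Matrix.add_apply, e, e, e]
  simp only [Fin.sum_univ_two, Matrix.add_apply]
  ring

theorem aux_smul (c : ℂ) (A : Matrix (Fin 2) (Fin 2) ℂ) : auxG (c • A) = c • auxG A := by
  ext a b
  exact mul_left_comm _ _ _

theorem aux_anti : PZ * PX = (-1 : ℂ) • (PX * PZ) := by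
  ext a b
  fin_cases a <;> fin_cases b <;> simp [PX, PZ]

theorem aux_unitary : (auxG (PX * PZ))ᴴ * auxG (PX * PZ) = 1 := by
  have h : (PX * PZ)ᴴ * (PX * PZ) = 1 := by
    ext a b
    fin_cases a <;> fin_cases b <;> simp [PX, PZ, Matrix.mul_apply, Fin.sum_univ_two]
  have : (kron I2 (PX * PZ))ᴴ * kron I2 (PX * PZ) = 1 := by
    unfold kron
    rw [Matrix.conjTranspose_reindex, Matrix.conjTranspose_kronecker]
    simp only [Matrix.reindex_apply, Matrix.submatrix_mul_equiv]
    rw [← Matrix.mul_kronecker_mul, h]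
    simp [I2]
  exact this

theorem aux_main (p q : ℝ) (hp : 0 ≤ p) (hq : 0 ≤ q) (ρ : Matrix (Fin 4) (Fin 4) ℂ) :
    contractCtrl (∑ i : Fin 2, ∑ j : Fin 2, auxV (Dk p i * Ek q j) (Ek q j * Dk p i) * auxR ρ *
      (auxV (Dk p i * Ek q j) (Ek q j * Dk p i))ᴴ) ketMinus =
      (p * q : ℝ) • (auxG (PX * PZ) * ρ * (auxG (PX * PZ))ᴴ) := by
  simp only [Fin.sum_univ_two, aux_contract_add, aux_branch]
  have hp' : (Real.sqrt p : ℂ) * (Real.sqrt p : ℂ) = p := by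
    rw [← Complex.ofReal_mul, Real.mul_self_sqrt hp]
  have hq' : (Real.sqrt q : ℂ) * (Real.sqrt q : ℂ) = q := by
    rw [← Complex.ofReal_mul, Real.mul_self_sqrt hq]
  have z : ∀ c d : ℂ, ∀ A : Matrix (Fin 2) (Fin 2) ℂ,
      auxG ((c • I2) * (d • A)) - auxG ((d • A) * (c • I2)) = 0 := by
    intro c d A
    simp [I2, smul_smul, mul_comm]
  have z' : ∀ c d : ℂ, ∀ A : Matrix (Fin 2) (Fin 2) ℂ,
      auxG ((d • A) * (c • I2)) - auxG ((c • I2) * (d • A)) = 0 := by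
    intro c d A
    simp [I2, smul_smul, mul_comm]
  have k : auxG (((Real.sqrt p : ℂ) • PX) * ((Real.sqrt q : ℂ) • PZ))
      - auxG (((Real.sqrt q : ℂ) • PZ) * ((Real.sqrt p : ℂ) • PX))
      = (2 * (Real.sqrt p : ℂ) * (Real.sqrt q : ℂ)) • auxG (PX * PZ) := by
    simp only [Matrix.smul_mul, Matrix.mul_smul, aux_anti, aux_smul, smul_smul, ← sub_smul]
    congr 1
    ring
  simp only [Dk, Ek, Matrix.cons_val_zero, Matrix.cons_val_one]
  rw [z, z, z', k]
  simp only [Matrix.zero_mul, smul_zero, zero_add, Matrix.conjTranspose_smul, Matrix.smul_mul,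
    Matrix.mul_smul, smul_smul]
  ext a b
  simp only [Matrix.smul_apply, smul_eq_mul, Complex.real_smul]
  congr 1
  simp
  linear_combination (Real.sqrt q : ℂ) * (Real.sqrt q : ℂ) * hp' + p * hq'

theorem aux_recover (U ρ : Matrix (Fin 4) (Fin 4) ℂ) (u : Uᴴ * U = 1) :
    Uᴴ * (U * ρ * Uᴴ) * U = ρ := by
  calc Uᴴ * (U * ρ * Uᴴ) * U = (Uᴴ * U) * ρ * (Uᴴ * U) := by simp only [Matrix.mul_assoc]
    _ = ρ := by rw [u]; simp

theorem minus_heralded_branch_noiseless (p q : ℝ) (hp : p ∈ Set.Icc (0 : ℝ) 1)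
    (hq : q ∈ Set.Icc (0 : ℝ) 1) (ρ : Matrix (Fin 4) (Fin 4) ℂ) :
    contractCtrl (Sout p q ρ) ketMinus =
      (p * q : ℝ) • (kron I2 (PX * PZ) * ρ * (kron I2 (PX * PZ))ᴴ)
    ∧ (kron I2 (PX * PZ))ᴴ * (kron I2 (PX * PZ) * ρ * (kron I2 (PX * PZ))ᴴ) *
        kron I2 (PX * PZ) = ρ := by
  exact ⟨aux_main p q hp.1 hq.1 ρ, aux_recover (auxG (PX * PZ)) ρ aux_unitary⟩

end
end

section
/- Let ρ_ψ be any 2×2 complex matrix with entries ρ_ψ^{ij} and ρ̃_e any 4×4 complex matrix with 2×2 blocks ρ̃_{e,11}, ρ̃_{e,12}, ρ̃_{e,21}, ρ̃_{e,22}. With ρ₁ = ρ_ψ ⊗ ρ̃_e, ρ₂ = (CNOT ⊗ I₂) ρ₁ (CNOT ⊗ I₂)†, ρ₃ = (H ⊗ I₄) ρ₂ (H ⊗ I₄)†, the projection onto Alice's measurement outcome |00⟩ satisfies Π₀₀ ρ₃ Π₀₀† = |00⟩⟨00| ⊗ (1/2)·( ρ_ψ^{11}·ρ̃_{e,11} +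 ρ_ψ^{12}·ρ̃_{e,12} + ρ_ψ^{21}·ρ̃_{e,21} + ρ_ψ^{22}·ρ̃_{e,22} ); in particular Bob's (unnormalized) post-measurement state for outcome 00 is proportional to ρ_ψ^{11}ρ̃_{e,11} + ρ_ψ^{12}ρ̃_{e,12} + ρ_ψ^{21}ρ̃_{e,21} + ρ_ψ^{22}ρ̃_{e,22}. -/
open Matrix Kronecker Complex

noncomputable section

/-- Controlled-NOT gate. -/
def CNOT : Matrix (Fin 4) (Fin 4) ℂ :=
  !![1, 0, 0, 0; 0, 1, 0, 0; 0, 0, 0, 1; 0, 0, 1, 0]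

/-- Hadamard gate. -/
def Hgate : Matrix (Fin 2) (Fin 2) ℂ := ((Real.sqrt 2 : ℂ))⁻¹ • !![1, 1; 1, -1]

/-- Two-qubit standard basis vectors |ij⟩. -/
def ket2 (i j : Fin 2) : Fin 4 → ℂ := fun k => if (k : ℕ) = 2 * (i : ℕ) + (j : ℕ) then 1 else 0

/-- Projector Π_{ij} = |ij⟩⟨ij| ⊗ I₂ onto Alice's measurement outcome ij. -/
def Pi2 (i j : Fin 2) : Matrix (Fin 8) (Fin 8) ℂ :=
  kron (vecMulVec (ket2 i j) (star (ket2 i j))) I2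

/-- The 2×2 block of a 4×4 matrix in (block-)position (a,b). -/
def blk (ρ : Matrix (Fin 4) (Fin 4) ℂ) (a b : Fin 2) : Matrix (Fin 2) (Fin 2) ℂ :=
  Matrix.of fun i j =>
    ρ ⟨2 * (a : ℕ) + (i : ℕ), by have := a.isLt; have := i.isLt; omega⟩
      ⟨2 * (b : ℕ) + (j : ℕ), by have := b.isLt; have := j.isLt; omega⟩

/-- Global state after Alice's CNOT and Hadamard gates in the teleportation circuit. -/
def rho3 (ρψ : Matrix (Fin 2) (Fin 2) ℂ) (ρe : Matrix (Fin 4) (Fin 4) ℂ) :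
    Matrix (Fin 8) (Fin 8) ℂ :=
  kron Hgate (1 : Matrix (Fin 4) (Fin 4) ℂ) *
    (kron CNOT I2 * kron ρψ ρe * (kron CNOT I2)ᴴ) *
    (kron Hgate (1 : Matrix (Fin 4) (Fin 4) ℂ))ᴴ

/-- The measurement branch for outcome 00, up to the factor `1/√2`. -/
def branch : Matrix (Fin 8) (Fin 8) ℂ := Matrix.of fun i j =>
  if (i : ℕ) = 0 ∧ ((j : ℕ) = 0 ∨ (j : ℕ) = 6) ∨ (i : ℕ) = 1 ∧ ((j : ℕ) = 1 ∨ (j : ℕ) = 7)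
  then 1 else 0

lemma kron_apply_four_two (A : Matrix (Fin 4) (Fin 4) ℂ) (B : Matrix (Fin 2) (Fin 2) ℂ) (i j : Fin 8) :
    (kron A B : Matrix (Fin 8) (Fin 8) ℂ) i j =
      A ⟨i / 2, by omega⟩ ⟨j / 2, by omega⟩ * B ⟨i % 2, by omega⟩ ⟨j % 2, by omega⟩ := rfl

lemma kron_apply_two_four (A : Matrix (Fin 2) (Fin 2) ℂ) (B : Matrix (Fin 4) (Fin 4) ℂ) (i j : Fin 8) :
    (kron A B : Matrix (Fin 8) (Fin 8) ℂ) i j =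
      A ⟨i / 4, by omega⟩ ⟨j / 4, by omega⟩ * B ⟨i % 4, by omega⟩ ⟨j % 4, by omega⟩ := rfl

/-- Left multiplication by the projector keeps the first two rows. -/
lemma proj_mul (X : Matrix (Fin 8) (Fin 8) ℂ) (i j : Fin 8) :
    (Pi2 0 0 * X) i j = if (i : ℕ) < 2 then X i j else 0 := by
  rw [Matrix.mul_apply]
  simp only [Pi2, kron_apply_four_two]
  fin_cases i <;> simp [Fin.sum_univ_eight, ket2, I2, vecMulVec_apply, Matrix.one_apply]

lemma cnot_mul (X : Matrix (Fin 8) (Fin 8) ℂ) (i j : Fin 8) :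
    ((kron CNOT I2 : Matrix (Fin 8) (Fin 8) ℂ) * X) i j
      = X (![0, 1, 2, 3, 6, 7, 4, 5] i) j := by
  rw [Matrix.mul_apply]
  simp only [kron_apply_four_two]
  fin_cases i <;> simp [Fin.sum_univ_eight, CNOT, I2, Matrix.one_apply]

lemma had_mul (X : Matrix (Fin 8) (Fin 8) ℂ) (i j : Fin 8) (hi : (i : ℕ) < 2) :
    ((kron Hgate (1 : Matrix (Fin 4) (Fin 4) ℂ) : Matrix (Fin 8) (Fin 8) ℂ) * X) i j
      = ((Real.sqrt 2 : ℂ))⁻¹ * (X i j + X ⟨i + 4, by omega⟩ j) := by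
  rw [Matrix.mul_apply]
  simp only [kron_apply_two_four]
  fin_cases i <;> simp at hi <;>
    simp [Fin.sum_univ_eight, Hgate, Matrix.one_apply, mul_add]

lemma branch_mul (X : Matrix (Fin 8) (Fin 8) ℂ) (i j : Fin 8) :
    (branch * X) i j = if (i : ℕ) = 0 then X 0 j + X 6 j else
      if (i : ℕ) = 1 then X 1 j + X 7 j else 0 := by
  rw [Matrix.mul_apply]
  fin_cases i <;> simp [Fin.sum_univ_eight, branch]

lemma mul_branch (X : Matrix (Fin 8) (Fin 8) ℂ) (i j : Fin 8) :
    (X * branchᴴ) i j = if (j : ℕ) = 0 then X i 0 + X i 6 else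
      if (j : ℕ) = 1 then X i 1 + X i 7 else 0 := by
  rw [Matrix.mul_apply]
  fin_cases j <;> simp [Fin.sum_univ_eight, branch]

lemma total_eq : Pi2 0 0 * ((kron Hgate (1 : Matrix (Fin 4) (Fin 4) ℂ) : Matrix (Fin 8) (Fin 8) ℂ)
    * (kron CNOT I2 : Matrix (Fin 8) (Fin 8) ℂ)) = ((Real.sqrt 2 : ℂ))⁻¹ • branch := by
  rw [← Matrix.mul_one (kron CNOT I2 : Matrix (Fin 8) (Fin 8) ℂ), ← Matrix.mul_one branch]
  ext i j
  rw [proj_mul, Matrix.smul_apply, branch_mul]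
  by_cases hi : (i : ℕ) < 2
  · rw [if_pos hi, had_mul _ _ _ hi, cnot_mul, cnot_mul]
    have : i = 0 ∨ i = 1 := by omega
    rcases this with rfl | rfl <;> simp <;> rfl
  · rw [if_neg hi, if_neg (by omega), if_neg (by omega), smul_zero]

lemma sandwich (P A B R : Matrix (Fin 8) (Fin 8) ℂ) :
    P * (A * (B * R * Bᴴ) * Aᴴ) * Pᴴ = (P * (A * B)) * R * (P * (A * B))ᴴ := by
  simp only [Matrix.conjTranspose_mul, Matrix.mul_assoc]

theorem teleportation_outcome_00 (ρψ : Matrix (Fin 2) (Fin 2) ℂ)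
    (ρe : Matrix (Fin 4) (Fin 4) ℂ) :
    Pi2 0 0 * rho3 ρψ ρe * (Pi2 0 0)ᴴ =
      kron (vecMulVec (ket2 0 0) (star (ket2 0 0)))
        (((2 : ℂ))⁻¹ • (ρψ 0 0 • blk ρe 0 0 + ρψ 0 1 • blk ρe 0 1
          + ρψ 1 0 • blk ρe 1 0 + ρψ 1 1 • blk ρe 1 1)) := by
  have h2 : ((Real.sqrt 2 : ℂ))⁻¹ * ((Real.sqrt 2 : ℂ))⁻¹ = (2 : ℂ)⁻¹ := by
    rw [← mul_inv, ← Complex.ofReal_mul, Real.mul_self_sqrt (by norm_num)]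
    norm_num
  have hs : star ((Real.sqrt 2 : ℂ))⁻¹ = ((Real.sqrt 2 : ℂ))⁻¹ := by
    simp
  refine (sandwich (Pi2 0 0) (kron Hgate (1 : Matrix (Fin 4) (Fin 4) ℂ)) (kron CNOT I2)
    (kron ρψ ρe)).trans ?_
  rw [total_eq, Matrix.conjTranspose_smul, hs, Matrix.smul_mul, Matrix.smul_mul, Matrix.mul_smul,
    smul_smul, h2]
  ext i j
  refine Eq.trans ?_ (kron_apply_four_two _ _ i j).symm
  rw [Matrix.smul_apply, mul_branch, branch_mul, branch_mul, branch_mul, branch_mul]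
  simp only [kron_apply_two_four]
  fin_cases i <;> fin_cases j <;>
    simp [ket2, vecMulVec_apply, blk] <;> ring

end
end

section
/- Let ρ_ψ be any 2×2 complex matrix with entries ρ_ψ^{ij} and ρ̃_e any 4×4 complex matrix with 2×2 blocks ρ̃_{e,11}, ρ̃_{e,12}, ρ̃_{e,21}, ρ̃_{e,22}. With ρ₁ = ρ_ψ ⊗ ρ̃_e, ρ₂ = (CNOT ⊗ I₂) ρ₁ (CNOT ⊗ I₂)†, ρ₃ = (H ⊗ I₄) ρ₂ (H ⊗ I₄)†, the projection onto Alice's measurement outcome |01⟩ satisfies Π₀₁ ρ₃ Π₀₁† = |01⟩⟨01| ⊗ (1/2)·( ρ_ψ^{22}·ρ̃_{e,11} + ρ_ψ^{21}·ρ̃_{e,12} + ρ_ψ^{12}·ρ̃_{e,21} + ρ_ψ^{11}·ρ̃_{e,22} ); Bob's corrected (unnormalized) state for outcome 01 is X·( ρ_ψ^{22}ρ̃_{e,11} + ρ_ψ^{21}ρ̃_{e,12} + ρ_ψ^{12}ρ̃_{e,21} + ρ_ψ^{11}ρ̃_{e,22} )·X† up to the normalization factor 2. -/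
open Matrix Kronecker Complex

noncomputable section

/-- Entries of the flattened Kronecker product. -/
lemma kron_apply {m n : ℕ} (A : Matrix (Fin m) (Fin m) ℂ) (B : Matrix (Fin n) (Fin n) ℂ)
    (i j : Fin (m * n)) :
    kron A B i j = A i.divNat j.divNat * B i.modNat j.modNat := rfl

lemma Pi01_eq : Pi2 0 1 = Matrix.diagonal ![0,0,1,1,0,0,0,0] := by
  ext i j
  unfold Pi2
  erw [kron_apply]
  fin_cases i <;> fin_cases j <;>
    simp [I2, ket2, vecMulVec, Fin.divNat, Fin.modNat, Matrix.diagonal, Matrix.one_apply]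

lemma CNOT_kron_eq : (kron CNOT I2 : Matrix (Fin 8) (Fin 8) ℂ) =
    Matrix.of fun i j => if j = ![0,1,2,3,6,7,4,5] i then 1 else 0 := by
  ext i j
  erw [kron_apply]
  fin_cases i <;> fin_cases j <;>
    simp [I2, CNOT, Fin.divNat, Fin.modNat, Matrix.one_apply]

lemma H_kron_row (i j : Fin 8) (hi : i = 2 ∨ i = 3) :
    (kron Hgate (1 : Matrix (Fin 4) (Fin 4) ℂ) : Matrix (Fin 8) (Fin 8) ℂ) i j =
      if j = i ∨ j = i + 4 then ((Real.sqrt 2 : ℂ))⁻¹ else 0 := by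
  erw [kron_apply]
  rcases hi with rfl | rfl <;> fin_cases j <;>
    simp [Hgate, Fin.divNat, Fin.modNat, Matrix.one_apply, Fin.ext_iff]

/-- The total Kraus operator for outcome 01. -/
lemma kraus01 : Pi2 0 1 * kron Hgate (1 : Matrix (Fin 4) (Fin 4) ℂ) * kron CNOT I2 =
    Matrix.of fun i j : Fin 8 => if (i = 2 ∧ (j = 2 ∨ j = 4)) ∨ (i = 3 ∧ (j = 3 ∨ j = 5))
      then ((Real.sqrt 2 : ℂ))⁻¹ else 0 := by
  rw [Pi01_eq, CNOT_kron_eq]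
  ext i j
  rw [Matrix.mul_apply]
  simp only [Matrix.diagonal_mul]
  by_cases hi : i = 2 ∨ i = 3
  · simp only [H_kron_row i _ hi]
    rcases hi with rfl | rfl <;> fin_cases j <;> simp [Fin.sum_univ_eight, Fin.ext_iff]
  · push Not at hi
    have : (![0,0,1,1,0,0,0,0] : Fin 8 → ℂ) i = 0 := by
      fin_cases i <;> simp at hi ⊢
    simp [this, hi.1, hi.2]

lemma inv_sqrt_two_mul : ((Real.sqrt 2 : ℂ))⁻¹ * ((Real.sqrt 2 : ℂ))⁻¹ = 2⁻¹ := by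
  rw [← mul_inv, ← Complex.ofReal_mul, Real.mul_self_sqrt (by norm_num)]
  norm_num

set_option maxHeartbeats 2000000 in
theorem teleportation_outcome_01 (ρψ : Matrix (Fin 2) (Fin 2) ℂ)
    (ρe : Matrix (Fin 4) (Fin 4) ℂ) :
    Pi2 0 1 * rho3 ρψ ρe * (Pi2 0 1)ᴴ =
      kron (vecMulVec (ket2 0 1) (star (ket2 0 1)))
        (((2 : ℂ))⁻¹ • (ρψ 1 1 • blk ρe 0 0 + ρψ 1 0 • blk ρe 0 1
          + ρψ 0 1 • blk ρe 1 0 + ρψ 0 0 • blk ρe 1 1)) := by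
  have h : Pi2 0 1 * rho3 ρψ ρe * (Pi2 0 1)ᴴ =
      (Pi2 0 1 * kron Hgate (1 : Matrix (Fin 4) (Fin 4) ℂ) * kron CNOT I2) * kron ρψ ρe *
      (Pi2 0 1 * kron Hgate (1 : Matrix (Fin 4) (Fin 4) ℂ) * kron CNOT I2)ᴴ := by
    unfold rho3
    generalize Pi2 0 1 = P
    have aux : ∀ P A B C : Matrix (Fin 8) (Fin 8) ℂ,
      P * (A * (B * C * Bᴴ) * Aᴴ) * Pᴴ = (P * A * B) * C * (P * A * B)ᴴ := by
      intro P A B C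
      simp only [Matrix.conjTranspose_mul, Matrix.mul_assoc]
    exact aux _ _ _ _
  rw [h, kraus01]
  have hs := inv_sqrt_two_mul
  generalize hS : ((Real.sqrt 2 : ℂ))⁻¹ = s at hs ⊢
  have hst : (starRingEnd ℂ) s = s := by rw [← hS]; simp
  ext i j
  erw [kron_apply]
  rw [Matrix.mul_apply]
  erw [Fin.sum_univ_eight]
  simp only [Matrix.mul_apply, Fin.sum_univ_eight]
  fin_cases i <;> fin_cases j <;>
    simp [ket2, vecMulVec, Fin.divNat, Fin.modNat, Fin.ext_iff, hst, blk, kron, finProdFinEquiv]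
  all_goals rw [← hs]; ring

end
end

section
/- Let p, q ∈ [0,1] with pq < 1 and let θ ∈ [0,π], φ ∈ [0,2π]. Set |ψ⟩ = cos(θ/2)|0⟩ + e^{iφ} sin(θ/2)|1⟩, ρ_ψ = |ψ⟩⟨ψ|, and let ρ̃_e = [ (1−p)(1−q)·ρ_e + p(1−q)·(I₂⊗X) ρ_e (I₂⊗X)† + (1−p)q·(I₂⊗Z) ρ_e (I₂⊗Z)† ] / (1−pq) with ρ_e = |Φ+⟩⟨Φ+|, partitioned into 2×2 blocks ρ̃_{e,ij}. Then the fidelity of Bob's teleported state for Alice's outcome 00, ρ_t = 2·(ρ_ψ^{11}ρ̃_{e,11} + ρ_ψ^{12}ρ̃_{e,12} + ρ_ψ^{21}ρ̃_{e,21} + ρ_ψ^{22}ρ̃_{e,22}), satisfies ⟨ψ| ρ_t |ψ⟩ = [ (1−p) − q(1−p)·sin²θ + p(1−q)·sin²θ·cos²φ ] / (1−pq). -/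
open Matrix Kronecker Complex

noncomputable section

/-- The EPR density matrix ρ_e = |Φ+⟩⟨Φ+|. -/
def rhoE : Matrix (Fin 4) (Fin 4) ℂ :=
  !![1/2, 0, 0, 1/2; 0, 0, 0, 0; 0, 0, 0, 0; 1/2, 0, 0, 1/2]

/-- The Bloch-sphere pure state |ψ⟩ = cos(θ/2)|0⟩ + e^{iφ} sin(θ/2)|1⟩. -/
def ketPsi (θ φ : ℝ) : Fin 2 → ℂ :=
  ![(Real.cos (θ / 2) : ℂ), Complex.exp (φ * Complex.I) * (Real.sin (θ / 2) : ℂ)]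

/-- Its density matrix ρ_ψ = |ψ⟩⟨ψ|. -/
def rhoPsi (θ φ : ℝ) : Matrix (Fin 2) (Fin 2) ℂ := vecMulVec (ketPsi θ φ) (star (ketPsi θ φ))

/-- Bob's teleported state for Alice's outcome 00 given the shared pair ρ̃_e. -/
def rhoT (θ φ : ℝ) (ρ : Matrix (Fin 4) (Fin 4) ℂ) : Matrix (Fin 2) (Fin 2) ℂ :=
  (2 : ℂ) • (rhoPsi θ φ 0 0 • blk ρ 0 0 + rhoPsi θ φ 0 1 • blk ρ 0 1
    + rhoPsi θ φ 1 0 • blk ρ 1 0 + rhoPsi θ φ 1 1 • blk ρ 1 1)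

/-- Fidelity ⟨ψ| ρ |ψ⟩ of a state ρ with respect to the pure state |ψ⟩. -/
def fidelity (θ φ : ℝ) (ρ : Matrix (Fin 2) (Fin 2) ℂ) : ℂ :=
  star (ketPsi θ φ) ⬝ᵥ (ρ *ᵥ ketPsi θ φ)

theorem kron_X_eq : kron I2 PX = (!![0,1,0,0;1,0,0,0;0,0,0,1;0,0,1,0] : Matrix (Fin 4) (Fin 4) ℂ) := by
  ext i j
  fin_cases i <;> fin_cases j <;>
    simp [kron, I2, PX, finProdFinEquiv, Fin.divNat, Fin.modNat, Matrix.one_apply]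

theorem kron_Z_eq : kron I2 PZ = (!![1,0,0,0;0,-1,0,0;0,0,1,0;0,0,0,-1] : Matrix (Fin 4) (Fin 4) ℂ) := by
  ext i j
  fin_cases i <;> fin_cases j <;>
    simp [kron, I2, PZ, finProdFinEquiv, Fin.divNat, Fin.modNat, Matrix.one_apply]

theorem conj_X_eq : (kron I2 PX * rhoE * (kron I2 PX)ᴴ) =
    (!![0,0,0,0;0,1/2,1/2,0;0,1/2,1/2,0;0,0,0,0] : Matrix (Fin 4) (Fin 4) ℂ) := by
  rw [kron_X_eq]
  ext i j
  fin_cases i <;> fin_cases j <;>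
    simp [rhoE, Matrix.mul_apply, Fin.sum_univ_four, Matrix.conjTranspose_apply]

theorem conj_Z_eq : (kron I2 PZ * rhoE * (kron I2 PZ)ᴴ) =
    (!![1/2,0,0,-1/2;0,0,0,0;0,0,0,0;-1/2,0,0,1/2] : Matrix (Fin 4) (Fin 4) ℂ) := by
  rw [kron_Z_eq]
  ext i j
  fin_cases i <;> fin_cases j <;>
    simp [rhoE, Matrix.mul_apply, Fin.sum_univ_four, Matrix.conjTranspose_apply] <;> norm_num

theorem fidelity_quantum_switch_plus (p q θ φ : ℝ) (hp : p ∈ Set.Icc (0 : ℝ) 1)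
    (hq : q ∈ Set.Icc (0 : ℝ) 1) (hpq : p * q < 1)
    (hθ : θ ∈ Set.Icc (0 : ℝ) Real.pi) (hφ : φ ∈ Set.Icc (0 : ℝ) (2 * Real.pi)) :
    fidelity θ φ (rhoT θ φ (((1 - p * q : ℝ)⁻¹ : ℂ) •
        (((1 - p) * (1 - q) : ℝ) • rhoE
          + (p * (1 - q) : ℝ) • (kron I2 PX * rhoE * (kron I2 PX)ᴴ)
          + ((1 - p) * q : ℝ) • (kron I2 PZ * rhoE * (kron I2 PZ)ᴴ)))) =
      ((((1 - p) - q * (1 - p) * Real.sin θ ^ 2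
          + p * (1 - q) * Real.sin θ ^ 2 * Real.cos φ ^ 2) / (1 - p * q) : ℝ) : ℂ) := by
  rw [conj_X_eq, conj_Z_eq]
  have hne : (1 - (p : ℂ) * q) ≠ 0 := by
    have h : (1 - p * q : ℝ) ≠ 0 := by linarith
    exact_mod_cast h
  have hexp : Complex.exp (φ * Complex.I) = Real.cos φ + Real.sin φ * Complex.I := by
    rw [Complex.exp_mul_I]; push_cast; rfl
  have hs : Real.sin θ = 2 * Real.sin (θ / 2) * Real.cos (θ / 2) := by
    rw [← Real.sin_two_mul]; ring_nf
  have h1 : (Real.sin (θ / 2) : ℂ) ^ 2 = 1 - (Real.cos (θ / 2) : ℂ) ^ 2 := by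
    have := Real.sin_sq_add_cos_sq (θ / 2)
    rw [eq_sub_iff_add_eq]; exact_mod_cast this
  have h2 : (Real.sin φ : ℂ) ^ 2 = 1 - (Real.cos φ : ℂ) ^ 2 := by
    have := Real.sin_sq_add_cos_sq φ
    rw [eq_sub_iff_add_eq]; exact_mod_cast this
  rw [hs]
  unfold fidelity rhoT rhoPsi ketPsi blk rhoE
  rw [hexp]
  generalize Real.sin (θ / 2) = s at *
  generalize Real.cos (θ / 2) = c at *
  generalize Real.sin φ = t at *
  generalize Real.cos φ = d at *
  have hI : Complex.I ^ 2 = -1 := Complex.I_sq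
  simp [dotProduct, Matrix.mulVec, Fin.sum_univ_two, vecMulVec_apply]
  field_simp
  clear hs hexp hne
  generalize Complex.I = j at *
  grind

end
end

section
/- For all p, q ∈ [0,1], (1/(4π)) · ∫₀^π ∫₀^{2π} [ (1−p) − q(1−p)·sin²θ + p(1−q)·sin²θ·cos²φ ] · sinθ dφ dθ = (3 − 2p − 2q + pq)/3. Consequently, if pq < 1, the average fidelity of the teleported qubit when the entanglement is distributed via a quantum switch, conditioned on the control-qubit outcome |+⟩, equals (3 − 2p − 2q + pq)/(3(1−pq)). -/
open Real

theorem switch_inner (A B s : ℝ) :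
    ∫ φ in (0 : ℝ)..(2 * π), (A + B * Real.cos φ ^ 2) * s = (2 * π * A + π * B) * s := by
  rw [intervalIntegral.integral_mul_const, intervalIntegral.integral_add
    (Continuous.intervalIntegrable (by fun_prop) _ _)
    (Continuous.intervalIntegrable (by fun_prop) _ _),
    intervalIntegral.integral_const_mul, integral_cos_sq]
  simp
  left
  ring

theorem switch_outer (C D : ℝ) :
    ∫ θ in (0 : ℝ)..π, (C * Real.sin θ + D * Real.sin θ ^ 3) = 2 * C + 4 / 3 * D := by
  rw [intervalIntegral.integral_add
    (Continuous.intervalIntegrable (by fun_prop) _ _)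
    (Continuous.intervalIntegrable (by fun_prop) _ _),
    intervalIntegral.integral_const_mul, intervalIntegral.integral_const_mul,
    integral_sin, integral_sin_pow_three]
  simp
  ring

theorem average_fidelity_quantum_switch_plus (p q : ℝ)
    (hp : p ∈ Set.Icc (0 : ℝ) 1) (hq : q ∈ Set.Icc (0 : ℝ) 1) :
    (1 / (4 * π)) * ∫ θ in (0 : ℝ)..π, (∫ φ in (0 : ℝ)..(2 * π),
        ((1 - p) - q * (1 - p) * Real.sin θ ^ 2
          + p * (1 - q) * Real.sin θ ^ 2 * Real.cos φ ^ 2) * Real.sin θ) =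
      (3 - 2 * p - 2 * q + p * q) / 3
    ∧ (p * q < 1 →
        (1 / (1 - p * q)) * ((1 / (4 * π)) * ∫ θ in (0 : ℝ)..π, (∫ φ in (0 : ℝ)..(2 * π),
            ((1 - p) - q * (1 - p) * Real.sin θ ^ 2
              + p * (1 - q) * Real.sin θ ^ 2 * Real.cos φ ^ 2) * Real.sin θ)) =
          (3 - 2 * p - 2 * q + p * q) / (3 * (1 - p * q))) := by
  have key : (1 / (4 * π)) * ∫ θ in (0 : ℝ)..π, (∫ φ in (0 : ℝ)..(2 * π),
        ((1 - p) - q * (1 - p) * Real.sin θ ^ 2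
          + p * (1 - q) * Real.sin θ ^ 2 * Real.cos φ ^ 2) * Real.sin θ) =
      (3 - 2 * p - 2 * q + p * q) / 3 := by
    simp_rw [switch_inner]
    have h := switch_outer (2 * π * (1 - p)) (π * (p * (1 - q)) - 2 * π * (q * (1 - p)))
    have e : ∀ θ : ℝ, (2 * π * ((1 - p) - q * (1 - p) * Real.sin θ ^ 2)
        + π * (p * (1 - q) * Real.sin θ ^ 2)) * Real.sin θ
        = 2 * π * (1 - p) * Real.sin θ
          + (π * (p * (1 - q)) - 2 * π * (q * (1 - p))) * Real.sin θ ^ 3 := by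
      intro θ
      ring
    simp_rw [e]
    rw [h]
    have := Real.pi_ne_zero
    field_simp
    ring
  refine ⟨key, fun hpq => ?_⟩
  rw [key]
  have : 1 - p * q ≠ 0 := (sub_pos.mpr hpq).ne'
  field_simp
end

section
/- For all p, q ∈ [0,1], (1/(4π)) · ∫₀^π ∫₀^{2π} [ (1−p) − q(1−2p)·sin²θ + p(1−2q)·sin²θ·cos²φ ] · sinθ dφ dθ = (3 − 2p − 2q + 2pq)/3. Consequently, the average fidelity of the teleported qubit when the EPR pair is distributed through a classical trajectory equals F̄^CT = (3 − 2p − 2q + 2pq)/3. -/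
open Real

theorem average_fidelity_classical_trajectory (p q : ℝ)
    (hp : p ∈ Set.Icc (0 : ℝ) 1) (hq : q ∈ Set.Icc (0 : ℝ) 1) :
    (1 / (4 * π)) * ∫ θ in (0 : ℝ)..π, (∫ φ in (0 : ℝ)..(2 * π),
        ((1 - p) - q * (1 - 2 * p) * Real.sin θ ^ 2
          + p * (1 - 2 * q) * Real.sin θ ^ 2 * Real.cos φ ^ 2) * Real.sin θ) =
      (3 - 2 * p - 2 * q + 2 * p * q) / 3 := by
  have inner : ∀ θ : ℝ, (∫ φ in (0 : ℝ)..(2 * π),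
        ((1 - p) - q * (1 - 2 * p) * Real.sin θ ^ 2
          + p * (1 - 2 * q) * Real.sin θ ^ 2 * Real.cos φ ^ 2) * Real.sin θ)
      = 2 * π * (1 - p) * Real.sin θ
        + π * (p * (1 - 2 * q) - 2 * q * (1 - 2 * p)) * Real.sin θ ^ 3 := by
    intro θ
    have hc : IntervalIntegrable (fun φ : ℝ => p * (1 - 2 * q) * Real.sin θ ^ 2 * Real.cos φ ^ 2)
        MeasureTheory.volume 0 (2 * π) := by
      apply Continuous.intervalIntegrable
      fun_prop
    rw [intervalIntegral.integral_mul_const,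
      intervalIntegral.integral_add intervalIntegrable_const hc,
      intervalIntegral.integral_const, intervalIntegral.integral_const_mul, integral_cos_sq]
    simp only [Real.sin_two_pi, Real.sin_zero, smul_eq_mul]
    ring
  have h3 : (∫ θ in (0 : ℝ)..π, Real.sin θ ^ 3) = 4 / 3 := by
    have h := integral_sin_pow (a := 0) (b := π) 1
    rw [show (1 + 2 : ℕ) = 3 from rfl] at h
    rw [h]
    simp only [pow_one, integral_sin, Real.sin_zero, Real.sin_pi, Real.cos_zero, Real.cos_pi]
    norm_num
  simp_rw [inner]
  rw [intervalIntegral.integral_add (Continuous.intervalIntegrable (by fun_prop) _ _)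
      (Continuous.intervalIntegrable (by fun_prop) _ _),
    intervalIntegral.integral_const_mul, intervalIntegral.integral_const_mul, h3, integral_sin,
    Real.cos_zero, Real.cos_pi]
  field_simp
  ring
end
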